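/- The linear isometries H₁ : (x,y,z) ↦ (γ₀(y), x, g(z)) and H₂ : (x,y,z) ↦ (y, γ₀(x), g(z)) of ℚ¹⁰ ⊕ ℚ¹⁰ ⊕ ℚ⁶ each map the Niemeier lattice N(A₉²D₆) onto itself; in particular H₁ and H₂ are automorphisms of N(A₉²D₆) inducing the exchange of the two A₉-components. -/

import Mathlib

noncomputable section

abbrev V6 : Type := Fin 6 → ℚ

/-- The standard bilinear form on `ℚ⁶`. -/
def bil6 (x y : V6) : ℚ := ∑ i, x i * y i

def d1 : V6 := ![1, -1, 0, 0, 0, 0]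
def d2 : V6 := ![0, 1, -1, 0, 0, 0]
def d3 : V6 := ![0, 0, 1, -1, 0, 0]
def d4 : V6 := ![0, 0, 0, 1, -1, 0]
def d5 : V6 := ![0, 0, 0, 0, 1, -1]
def d6 : V6 := ![0, 0, 0, 0, 1, 1]

/-- The `D₆` root lattice: integer vectors with even coordinate sum. -/
def D6 : Submodule ℤ V6 where
  carrier := {x | (∀ i, ∃ m : ℤ, x i = (m : ℚ)) ∧ ∃ k : ℤ, (∑ i, x i) = 2 * (k : ℚ)}
  add_mem' := by
    rintro x y ⟨hx1, kx, hx2⟩ ⟨hy1, ky, hy2⟩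
    refine ⟨fun i => ?_, kx + ky, ?_⟩
    · obtain ⟨m, hm⟩ := hx1 i
      obtain ⟨m', hm'⟩ := hy1 i
      exact ⟨m + m', by push_cast [Pi.add_apply, hm, hm']; ring⟩
    · have : (∑ i, (x + y) i) = (∑ i, x i) + ∑ i, y i := by
        simp [Pi.add_apply, Finset.sum_add_distrib]
      rw [this, hx2, hy2]; push_cast; ring
  zero_mem' := ⟨fun i => ⟨0, by simp⟩, 0, by simp⟩
  smul_mem' := by
    rintro c x ⟨hx1, k, hx2⟩
    refine ⟨fun i => ?_, c * k, ?_⟩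
    · obtain ⟨m, hm⟩ := hx1 i
      refine ⟨c * m, ?_⟩
      have : (c • x) i = (c : ℚ) * x i := by simp [Pi.smul_apply, zsmul_eq_mul]
      rw [this, hm]; push_cast; ring
    · have : (∑ i, (c • x) i) = (c : ℚ) * ∑ i, x i := by
        simp [Pi.smul_apply, zsmul_eq_mul, Finset.mul_sum]
      rw [this, hx2]; push_cast; ring

/-- The first embedding `i₁(A₅) ⊂ D₆`, spanned by `d₁,…,d₅`. -/
def i1A5 : Submodule ℤ V6 := Submodule.span ℤ {d1, d2, d3, d4, d5}

/-- The second embedding `i₂(A₅) ⊂ D₆`, spanned by `d₁,…,d₄,d₆`. -/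
def i2A5 : Submodule ℤ V6 := Submodule.span ℤ {d1, d2, d3, d4, d6}

/-- The Weyl group `W(D₆)`: the subgroup of linear automorphisms of `ℚ⁶` generated by
the reflections in the roots (norm-`2` vectors) of `D₆`. -/
def WeylD6 : Subgroup (V6 ≃ₗ[ℚ] V6) :=
  Subgroup.closure {s | ∃ r ∈ (D6 : Set V6), bil6 r r = 2 ∧ ∀ x, s x = x - bil6 x r • r}


/-- The nontrivial Dynkin diagram automorphism `g` of `D₆`:
`g(e₆) = -e₆` and `g(eᵢ) = eᵢ` for `i ≤ 5` (it interchanges `d₅` and `d₆`). -/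
def gmap (x : V6) : V6 := fun i => if i = 5 then -x 5 else x i

/-- The glue vector `δ₆ = ½(d₁+2d₂+3d₃+4d₄+2d₅+3d₆)`, representing the class `[1]`. -/
def delta6 : V6 :=
  (1/2 : ℚ) • (d1 + (2 : ℚ) • d2 + (3 : ℚ) • d3 + (4 : ℚ) • d4 + (2 : ℚ) • d5 + (3 : ℚ) • d6)

/-- The glue vector `δ̄₆ = d₁+d₂+d₃+d₄+½(d₅+d₆)`, representing the class `[2]`. -/
def deltaBar6 : V6 := d1 + d2 + d3 + d4 + (1/2 : ℚ) • (d5 + d6)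

/-- The glue vector `δ̃₆ = ½(d₁+2d₂+3d₃+4d₄+3d₅+2d₆)`, representing the class `[3]`. -/
def deltaTilde6 : V6 :=
  (1/2 : ℚ) • (d1 + (2 : ℚ) • d2 + (3 : ℚ) • d3 + (4 : ℚ) • d4 + (3 : ℚ) • d5 + (2 : ℚ) • d6)

abbrev V10 : Type := Fin 10 → ℚ

/-- The standard bilinear form on `ℚ¹⁰`. -/
def bil10 (x y : V10) : ℚ := ∑ i, x i * y i

/-- The simple roots `aᵢ = eᵢ - eᵢ₊₁` of `A₉` (here `a i` is `a_{i+1}` for `i : Fin 9`). -/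
def a (i : Fin 9) : V10 :=
  fun j => if (j : ℕ) = (i : ℕ) then 1 else if (j : ℕ) = (i : ℕ) + 1 then -1 else 0

/-- The `A₉` root lattice: integer vectors in `ℚ¹⁰` with coordinate sum zero. -/
def A9 : Submodule ℤ V10 where
  carrier := {x | (∀ i, ∃ m : ℤ, x i = (m : ℚ)) ∧ (∑ i, x i) = 0}
  add_mem' := by
    rintro x y ⟨hx1, hx2⟩ ⟨hy1, hy2⟩
    refine ⟨fun i => ?_, ?_⟩
    · obtain ⟨m, hm⟩ := hx1 i
      obtain ⟨m', hm'⟩ := hy1 i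
      exact ⟨m + m', by push_cast [Pi.add_apply, hm, hm']; ring⟩
    · have : (∑ i, (x + y) i) = (∑ i, x i) + ∑ i, y i := by
        simp [Pi.add_apply, Finset.sum_add_distrib]
      rw [this, hx2, hy2]; ring
  zero_mem' := ⟨fun i => ⟨0, by simp⟩, by simp⟩
  smul_mem' := by
    rintro c x ⟨hx1, hx2⟩
    refine ⟨fun i => ?_, ?_⟩
    · obtain ⟨m, hm⟩ := hx1 i
      refine ⟨c * m, ?_⟩
      have : (c • x) i = (c : ℚ) * x i := by simp [Pi.smul_apply, zsmul_eq_mul]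
      rw [this, hm]; push_cast; ring
    · have : (∑ i, (c • x) i) = (c : ℚ) * ∑ i, x i := by
        simp [Pi.smul_apply, zsmul_eq_mul, Finset.mul_sum]
      rw [this, hx2]; ring

/-- The glue generator `α = (1/10)(9a₁+8a₂+7a₃+6a₄+5a₅+4a₆+3a₇+2a₈+a₉)` of `A₉*/A₉`. -/
def alphaA9 : V10 := (1/10 : ℚ) • ∑ i : Fin 9, ((9 : ℚ) - (i : ℕ)) • a i

/-- The nontrivial diagram automorphism `γ₀` of `A₉`: `eᵢ ↦ -e₁₁₋ᵢ` (so `aᵢ ↦ a₁₀₋ᵢ`). -/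
def gamma0 (x : V10) : V10 := fun j => -(x j.rev)

abbrev V26 : Type := V10 × V10 × V6

/-- The standard bilinear form on `ℚ²⁶ = ℚ¹⁰ ⊕ ℚ¹⁰ ⊕ ℚ⁶`. -/
def bil26 (x y : V26) : ℚ := bil10 x.1 y.1 + bil10 x.2.1 y.2.1 + bil6 x.2.2 y.2.2

/-- The Niemeier lattice `N(A₉²D₆)`: the `ℤ`-submodule of `ℚ²⁶` generated by `A₉ ⊕ A₉ ⊕ D₆`
together with the glue vectors `(2α,4α,0)`, `(5α,0,δ₆)` and `(0,5α,δ̃₆)`. -/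
def NL2 : Submodule ℤ V26 :=
  Submodule.span ℤ ({p : V26 | p.1 ∈ A9 ∧ p.2.1 ∈ A9 ∧ p.2.2 ∈ D6} ∪
    {((2 : ℚ) • alphaA9, (4 : ℚ) • alphaA9, 0),
     ((5 : ℚ) • alphaA9, 0, delta6),
     (0, (5 : ℚ) • alphaA9, deltaTilde6)})

/-! Modulo `A₉` the diagram automorphism `γ₀` acts as `-1` on the dual lattice `A₉*`, whose classes
are killed by `10`, while `g` preserves `D₆` and exchanges `δ₆` and `δ̃₆`. Hence, modulo the root
lattice, `H₁` exchanges the glue vectors `(5α, 0, δ₆)` and `(0, 5α, δ̃₆)` and triples `(2α, 4α, 0)`,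
so `H₁` maps the Niemeier lattice into itself. As `H₁` has order `4` and `H₂ = H₁³`, both maps are
onto. -/

theorem image_eq_self_of_mapsTo_of_iterate_eq_id {X : Type*} {f : X → X} {s : Set X} {n : ℕ}
    (hn : n ≠ 0) (hs : Set.MapsTo f s s) (hf : f^[n] = id) : f '' s = s := by
  obtain ⟨k, rfl⟩ := Nat.exists_eq_succ_of_ne_zero hn
  refine hs.image_subset.antisymm fun x hx ↦ ⟨f^[k] x, hs.iterate k hx, ?_⟩
  rw [← Function.iterate_succ_apply' f k x, hf, id]

theorem gamma0_add (x y : V10) : gamma0 (x + y) = gamma0 x + gamma0 y :=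
  funext fun _ ↦ neg_add _ _

theorem gamma0_smul (c : ℚ) (x : V10) : gamma0 (c • x) = c • gamma0 x :=
  funext fun _ ↦ (mul_neg _ _).symm

theorem gamma0_zero : gamma0 0 = 0 :=
  funext fun _ ↦ neg_zero

theorem gamma0_involutive : Function.Involutive gamma0 := fun x ↦ by
  ext j
  simp [gamma0]

theorem sum_gamma0 (x : V10) : ∑ i, gamma0 x i = -∑ i, x i := by
  simp only [gamma0, Finset.sum_neg_distrib]
  exact congrArg Neg.neg (Equiv.sum_comp Fin.revPerm x)

theorem gamma0_mem_A9 {x : V10} (hx : x ∈ A9) : gamma0 x ∈ A9 := by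
  obtain ⟨hint, hsum⟩ := hx
  refine ⟨fun i ↦ ?_, by rw [sum_gamma0, hsum, neg_zero]⟩
  obtain ⟨m, hm⟩ := hint i.rev
  exact ⟨-m, by simp [gamma0, hm]⟩

theorem gamma0_add_self_mem_A9 {x : V10} (hx : ∀ i j, ∃ m : ℤ, x i - x j = m) :
    gamma0 x + x ∈ A9 := by
  refine ⟨fun i ↦ ?_, ?_⟩
  · obtain ⟨m, hm⟩ := hx i i.rev
    exact ⟨m, by rw [← hm, Pi.add_apply, gamma0, neg_add_eq_sub]⟩
  · simp only [Pi.add_apply, Finset.sum_add_distrib, sum_gamma0, neg_add_cancel]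

-- Integral coordinate differences and vanishing sum characterise the dual lattice `A₉*`.
theorem ten_smul_mem_A9 {x : V10} (hx : ∀ i j, ∃ m : ℤ, x i - x j = m) (hsum : ∑ i, x i = 0) :
    (10 : ℤ) • x ∈ A9 := by
  choose m hm using hx
  refine ⟨fun i ↦ ⟨∑ j, m i j, ?_⟩, ?_⟩
  · have sum_differences : ∑ j, (x i - x j) = 10 * x i := by
      simp [Finset.sum_sub_distrib, hsum]
    push_cast
    simp only [← hm, sum_differences, Pi.smul_apply, zsmul_eq_mul, Int.cast_ofNat]
  · simp only [Pi.smul_apply, ← Finset.smul_sum, hsum, smul_zero]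

theorem alphaA9_eq : alphaA9 = Pi.single 0 1 - fun _ ↦ 1 / 10 := by
  ext j
  fin_cases j <;> norm_num [alphaA9, a, Fin.sum_univ_succ]

theorem sum_alphaA9 : ∑ i, alphaA9 i = 0 := by
  simp [alphaA9_eq, Finset.sum_sub_distrib]

theorem exists_int_eq_alphaA9_sub (i j : Fin 10) : ∃ m : ℤ, alphaA9 i - alphaA9 j = m :=
  ⟨(Pi.single 0 1 : Fin 10 → ℤ) i - (Pi.single 0 1 : Fin 10 → ℤ) j, by
    simp [alphaA9_eq, Pi.single_apply]⟩

theorem gamma0_smul_alphaA9_sub_smul_mem_A9 {k l : ℤ} (h : 10 ∣ k + l) :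
    gamma0 ((k : ℚ) • alphaA9) - (l : ℚ) • alphaA9 ∈ A9 := by
  obtain ⟨n, hn⟩ := h
  have hl : (l : ℚ) = 10 * n - k := by
    rw [eq_sub_iff_add_eq']
    exact_mod_cast hn
  have decomposition : gamma0 ((k : ℚ) • alphaA9) - (l : ℚ) • alphaA9 =
      k • (gamma0 alphaA9 + alphaA9) - n • (10 : ℤ) • alphaA9 := by
    rw [gamma0_smul, hl]
    module
  rw [decomposition]
  exact A9.sub_mem (A9.smul_mem k (gamma0_add_self_mem_A9 exists_int_eq_alphaA9_sub))
    (A9.smul_mem n (ten_smul_mem_A9 exists_int_eq_alphaA9_sub sum_alphaA9))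

theorem gmap_eq_sub_single (x : V6) : gmap x = x - Pi.single 5 (2 * x 5) := by
  ext i
  rcases eq_or_ne i 5 with rfl | hi
  · simp only [gmap, if_true, Pi.sub_apply, Pi.single_eq_same]
    ring
  · simp [gmap, hi]

theorem gmap_add (x y : V6) : gmap (x + y) = gmap x + gmap y := by
  simp only [gmap_eq_sub_single, Pi.add_apply, mul_add, Pi.single_add]
  abel

theorem gmap_smul (c : ℚ) (x : V6) : gmap (c • x) = c • gmap x := by
  simp only [gmap_eq_sub_single, smul_sub, ← Pi.single_smul, Pi.smul_apply, smul_eq_mul,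
    mul_left_comm]

theorem gmap_zero : gmap 0 = 0 := by
  simp [gmap_eq_sub_single]

theorem gmap_involutive : Function.Involutive gmap := fun x ↦ by
  ext i
  rcases eq_or_ne i 5 with rfl | hi
  · simp [gmap]
  · simp [gmap, hi]

theorem single_two_mul_mem_D6 (i : Fin 6) (m : ℤ) : (Pi.single i (2 * (m : ℚ)) : V6) ∈ D6 := by
  refine ⟨fun j ↦ ⟨(Pi.single i (2 * m) : Fin 6 → ℤ) j, ?_⟩, m, by simp⟩
  simp [Pi.single_apply]

theorem gmap_mem_D6 {x : V6} (hx : x ∈ D6) : gmap x ∈ D6 := by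
  obtain ⟨m, hm⟩ := hx.1 5
  rw [gmap_eq_sub_single, hm]
  exact D6.sub_mem hx (single_two_mul_mem_D6 5 m)

theorem delta6_eq : delta6 = fun _ ↦ 1 / 2 := by
  ext i
  fin_cases i <;> norm_num [delta6, d1, d2, d3, d4, d5, d6]

theorem deltaTilde6_eq : deltaTilde6 = fun i ↦ if i = 5 then -(1 / 2) else 1 / 2 := by
  ext i
  fin_cases i <;> norm_num [deltaTilde6, d1, d2, d3, d4, d5, d6, Fin.ext_iff]

theorem gmap_delta6 : gmap delta6 = deltaTilde6 := by
  rw [delta6_eq, deltaTilde6_eq]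
  rfl

theorem gmap_deltaTilde6 : gmap deltaTilde6 = delta6 := by
  rw [← gmap_delta6, gmap_involutive]

theorem prod_A9_A9_D6_le_NL2 : A9.prod (A9.prod D6) ≤ NL2 :=
  fun _ hp ↦ Submodule.subset_span (Or.inl hp)

theorem mem_NL2_of_sub_mem {p q : V26} (hq : q ∈ NL2) (h : p - q ∈ A9.prod (A9.prod D6)) :
    p ∈ NL2 :=
  (NL2.sub_mem_iff_left hq).1 (prod_A9_A9_D6_le_NL2 h)

theorem two_alpha_four_alpha_mem_NL2 : (((2 : ℚ) • alphaA9, (4 : ℚ) • alphaA9, 0) : V26) ∈ NL2 :=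
  Submodule.subset_span (by simp)

theorem five_alpha_delta6_mem_NL2 : (((5 : ℚ) • alphaA9, 0, delta6) : V26) ∈ NL2 :=
  Submodule.subset_span (by simp)

theorem five_alpha_deltaTilde6_mem_NL2 : ((0, (5 : ℚ) • alphaA9, deltaTilde6) : V26) ∈ NL2 :=
  Submodule.subset_span (by simp)

/-- The isometry `H₁ : (x, y, z) ↦ (γ₀(y), x, g(z))` of `ℚ²⁶`, as a `ℚ`-linear map. The map
`H₂` enters as its third iterate. -/
def H1 : V26 →ₗ[ℚ] V26 where
  toFun p := (gamma0 p.2.1, p.1, gmap p.2.2)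
  map_add' _ _ := Prod.ext (gamma0_add _ _) (Prod.ext rfl (gmap_add _ _))
  map_smul' _ _ := Prod.ext (gamma0_smul _ _) (Prod.ext rfl (gmap_smul _ _))

theorem H1_apply (x y : V10) (z : V6) : H1 (x, y, z) = (gamma0 y, x, gmap z) := rfl

theorem H1_iterate_three : H1^[3] = fun p : V26 ↦ (p.2.1, gamma0 p.1, gmap p.2.2) := by
  funext ⟨x, y, z⟩
  simp only [Function.iterate_succ_apply, Function.iterate_zero_apply, H1_apply,
    gamma0_involutive y, gmap_involutive z]

theorem H1_iterate_four : H1^[4] = id := by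
  funext ⟨x, y, z⟩
  rw [Function.iterate_succ_apply', H1_iterate_three]
  simp only [H1_apply, gamma0_involutive x, gmap_involutive z, id]

theorem H1_two_alpha_four_alpha_mem_NL2 :
    H1 ((2 : ℚ) • alphaA9, (4 : ℚ) • alphaA9, 0) ∈ NL2 := by
  rw [H1_apply, gmap_zero]
  refine mem_NL2_of_sub_mem (NL2.smul_mem 3 two_alpha_four_alpha_mem_NL2) ⟨?_, ?_, ?_⟩
  · have six_eq : (3 : ℤ) • (2 : ℚ) • alphaA9 = (6 : ℚ) • alphaA9 := by module
    change gamma0 ((4 : ℚ) • alphaA9) - (3 : ℤ) • (2 : ℚ) • alphaA9 ∈ A9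
    rw [six_eq]
    exact mod_cast gamma0_smul_alphaA9_sub_smul_mem_A9 (k := 4) (l := 6) (by decide)
  · have neg_ten_eq : (2 : ℚ) • alphaA9 - (3 : ℤ) • (4 : ℚ) • alphaA9 = -((10 : ℤ) • alphaA9) := by
      module
    change (2 : ℚ) • alphaA9 - (3 : ℤ) • (4 : ℚ) • alphaA9 ∈ A9
    rw [neg_ten_eq]
    exact A9.neg_mem (ten_smul_mem_A9 exists_int_eq_alphaA9_sub sum_alphaA9)
  · simp

theorem H1_five_alpha_delta6_mem_NL2 : H1 ((5 : ℚ) • alphaA9, 0, delta6) ∈ NL2 := by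
  rw [H1_apply, gamma0_zero, gmap_delta6]
  exact five_alpha_deltaTilde6_mem_NL2

theorem H1_five_alpha_deltaTilde6_mem_NL2 : H1 (0, (5 : ℚ) • alphaA9, deltaTilde6) ∈ NL2 := by
  rw [H1_apply, gmap_deltaTilde6]
  refine mem_NL2_of_sub_mem five_alpha_delta6_mem_NL2 ⟨?_, ?_, ?_⟩
  · exact mod_cast gamma0_smul_alphaA9_sub_smul_mem_A9 (k := 5) (l := 5) (by decide)
  · simp
  · simp

theorem H1_mem_NL2 {p : V26} (hp : p ∈ NL2) : H1 p ∈ NL2 := by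
  suffices NL2 ≤ NL2.comap (H1.restrictScalars ℤ) from this hp
  refine Submodule.span_le.2 ?_
  rintro q (⟨hx, hy, hz⟩ | rfl | rfl | rfl)
  · exact prod_A9_A9_D6_le_NL2 ⟨gamma0_mem_A9 hy, hx, gmap_mem_D6 hz⟩
  · exact H1_two_alpha_four_alpha_mem_NL2
  · exact H1_five_alpha_delta6_mem_NL2
  · exact H1_five_alpha_deltaTilde6_mem_NL2

/-- The linear isometries `H₁ : (x,y,z) ↦ (γ₀(y), x, g(z))` and
`H₂ : (x,y,z) ↦ (y, γ₀(x), g(z))` each map the Niemeier lattice `N(A₉²D₆)` onto itself. -/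
theorem H1_H2_preserve_NiemeierA9A9D6 :
    (fun p : V26 => (gamma0 p.2.1, p.1, gmap p.2.2)) '' (NL2 : Set V26) = (NL2 : Set V26) ∧
    (fun p : V26 => (p.2.1, gamma0 p.1, gmap p.2.2)) '' (NL2 : Set V26) = (NL2 : Set V26) := by
  have image_H1 : H1 '' (NL2 : Set V26) = NL2 :=
    image_eq_self_of_mapsTo_of_iterate_eq_id four_ne_zero (fun _ ↦ H1_mem_NL2) H1_iterate_four
  refine ⟨image_H1, ?_⟩
  rw [← H1_iterate_three, Set.image_iterate_eq]
  exact Function.iterate_fixed image_H1 3
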